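/- Let r be an even natural number and set ℓ = (r+6)/3 if r ≡ 0 (mod 6), ℓ = (r+4)/3 if r ≡ 2 (mod 6), and ℓ = (r+2)/3 if r ≡ 4 (mod 6). Then there exist real numbers a_1, …, a_ℓ (depending only on r) and a natural number N such that, for every homogeneous polynomial f of degree r in two real variables, there exist real constants b and c (depending on f) with S_n(f) = Σ_{j=1}^{ℓ} a_j S_{n−j}(f) + b + c·(−1)^n for all n ≥ N. -/

import Mathlib

/-- The Stern array: `stern n k` is the entry `s(n,k)` of the Stern array,
with `s(1,1) = 1`, `s(1,k) = 0` for `k ≠ 1`, and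
`s(n,2k) = s(n-1,k)`, `s(n,2k+1) = s(n-1,k) + s(n-1,k+1)`. -/
def stern : ℕ → ℤ → ℕ
  | 0, _ => 0
  | 1, k => if k = 1 then 1 else 0
  | n + 2, k =>
    if k % 2 = 0 then stern (n + 1) (k / 2)
    else stern (n + 1) ((k - 1) / 2) + stern (n + 1) ((k + 1) / 2)

/-- For a polynomial `f` in two variables,
`S n f = ∑_{k=0}^{2^n - 1} f(s(n,k), s(n,k+1))`. -/
noncomputable def S (n : ℕ) (f : MvPolynomial (Fin 2) ℝ) : ℝ :=
  ∑ k ∈ Finset.range (2 ^ n),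
    MvPolynomial.eval ![(stern n (k : ℤ) : ℝ), (stern n ((k : ℤ) + 1) : ℝ)] f

/-!
Let `Tf(x, y) = f(x, x + y) + f(x + y, y)`, so that summing `f` over a row of the array is summing
`Tf` over the previous one. Put `Jf(x, y) = f(x, -y)` and, with `z = -x - y`,
`Pf(x, y) = f(x, y) + f(x, z) + f(z, y)`. In even degree `T = (P - 1) J` and `J² = 1`, hence
`T² - 1 = P J T - J P J`. As `P` maps symmetric forms into the space `W` of forms symmetric in `x`,
`y` and `z`, the operator `T² - 1` maps symmetric forms into `W + J W`, which `T` preserves. If `q`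
is a monic multiple of the characteristic polynomial of `T` on `W + J W`, then `q(T) (T² - 1)`
vanishes on symmetric forms, so the row sums satisfy the recurrence with characteristic polynomial
`q` up to a term of period two in `n`, that is, `b + c (-1)^n`.

The order of the recurrence is controlled by `dim W ≤ ⌊r / 6⌋ + 1`: if `x ^ k` exactly divides
`w ∈ W`, then `k` is even, and `(x y (x + y)) ^ k` divides `w`, so that `3 k ≤ r`.
-/

namespace SternArray

open MvPolynomial Matrix

section LinearSubstitution

variable {R n : Type*} [Fintype n]

section Semiring

variable [CommSemiring R]

/-- Substitution of linear forms for the variables: `linSubst A f` is `f ∘ A`, that is, the `i`-th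
variable is replaced by the linear form given by the `i`-th row of `A`. -/
noncomputable def linSubst (A : Matrix n n R) : MvPolynomial n R →ₐ[R] MvPolynomial n R :=
  bind₁ A.toMvPolynomial

lemma linSubst_X (A : Matrix n n R) (i : n) : linSubst A (X i) = A.toMvPolynomial i :=
  bind₁_X_right _ _

lemma linSubst_one [DecidableEq n] (f : MvPolynomial n R) : linSubst 1 f = f := by
  rw [linSubst, toMvPolynomial_one, bind₁_X_left, AlgHom.id_apply]

lemma linSubst_linSubst (A B : Matrix n n R) (f : MvPolynomial n R) :
    linSubst A (linSubst B f) = linSubst (B * A) f := by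
  simp only [linSubst, bind₁_bind₁, ← toMvPolynomial_mul]

lemma eval_linSubst (A : Matrix n n R) (v : n → R) (f : MvPolynomial n R) :
    eval v (linSubst A f) = eval (A *ᵥ v) f := by
  have eval_row (i : n) : eval₂Hom (RingHom.id R) v (A.toMvPolynomial i) = (A *ᵥ v) i :=
    toMvPolynomial_eval_eq_apply A i v
  simp only [linSubst, eval, eval₂Hom_bind₁, eval_row]

lemma isHomogeneous_linSubst {r : ℕ} {f : MvPolynomial n R} (hf : f.IsHomogeneous r)
    (A : Matrix n n R) : (linSubst A f).IsHomogeneous r := by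
  simpa only [one_mul, linSubst, bind₁] using hf.aeval _ A.toMvPolynomial_isHomogeneous

/-- The forms of degree `r` that are unchanged by every substitution in `G`. -/
noncomputable def invariantForms (r : ℕ) (G : Set (Matrix n n R)) :
    Submodule R (MvPolynomial n R) where
  carrier := {f | f.IsHomogeneous r ∧ ∀ A ∈ G, linSubst A f = f}
  add_mem' hf hg := ⟨hf.1.add hg.1, fun A hA ↦ by rw [map_add, hf.2 A hA, hg.2 A hA]⟩
  zero_mem' := ⟨isHomogeneous_zero _ _ _, fun _ _ ↦ map_zero _⟩
  smul_mem' c _ hf := ⟨(homogeneousSubmodule n R r).smul_mem c hf.1,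
    fun A hA ↦ by rw [map_smul, hf.2 A hA]⟩

end Semiring

lemma linSubst_neg_of_even [CommRing R] {r : ℕ} (hr : Even r) {f : MvPolynomial n R}
    (hf : f.IsHomogeneous r) (A : Matrix n n R) : linSubst (-A) f = linSubst A f := by
  have neg_row (i : n) : (-A).toMvPolynomial i = -A.toMvPolynomial i := by
    simp only [toMvPolynomial, Matrix.neg_apply, map_neg, Finset.sum_neg_distrib]
  simp only [linSubst, bind₁, aeval_def, eval₂_eq', neg_row]
  refine Finset.sum_congr rfl fun d hd ↦ ?_
  have even_degree : Even (∑ i, d i) := by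
    rwa [← Finsupp.degree_eq_sum, Finsupp.degree_apply, ← hf.degree_eq_sum_deg_support hd]
  simp_rw [neg_pow (A.toMvPolynomial _), Finset.prod_mul_distrib, Finset.prod_pow_eq_pow_sum,
    even_degree.neg_one_pow, one_mul]

end LinearSubstitution

section Operators

variable {R : Type*} [CommRing R] {r : ℕ} {f : MvPolynomial (Fin 2) R}

/-- The matrix of `(x, y) ↦ (y, x)`. -/
def swapMat (R : Type*) [CommRing R] : Matrix (Fin 2) (Fin 2) R := !![0, 1; 1, 0]

/-- The matrix of `(x, y) ↦ (x, z)`, where `x + y + z = 0`. -/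
def replaceSndMat (R : Type*) [CommRing R] : Matrix (Fin 2) (Fin 2) R := !![1, 0; -1, -1]

/-- The matrix of `(x, y) ↦ (z, y)`, where `x + y + z = 0`. -/
def replaceFstMat (R : Type*) [CommRing R] : Matrix (Fin 2) (Fin 2) R := !![-1, -1; 0, 1]

/-- The matrix of `(x, y) ↦ (x, -y)`. -/
def flipMat (R : Type*) [CommRing R] : Matrix (Fin 2) (Fin 2) R := !![1, 0; 0, -1]

/-- The binary forms of degree `r` that are symmetric in the two variables. -/
noncomputable abbrev symmForms (R : Type*) [CommRing R] (r : ℕ) :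
    Submodule R (MvPolynomial (Fin 2) R) :=
  invariantForms r {swapMat R}

/-- The binary forms of degree `r` that, with `z = -x - y`, are symmetric in `x`, `y` and `z`. -/
noncomputable abbrev zeroSumSymmForms (R : Type*) [CommRing R] (r : ℕ) :
    Submodule R (MvPolynomial (Fin 2) R) :=
  invariantForms r {swapMat R, replaceSndMat R}

/-- The operator `f(x, y) ↦ f(x, x + y) + f(x + y, y)`, which turns a sum over consecutive pairs in
a row of the Stern array into the corresponding sum over the previous row. -/
noncomputable def sternOp : Module.End R (MvPolynomial (Fin 2) R) :=
  (linSubst !![1, 0; 1, 1]).toLinearMap + (linSubst !![1, 1; 0, 1]).toLinearMap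

/-- The operator `f(x, y) ↦ f(x, y) + f(x, z) + f(z, y)`, where `z = -x - y`. -/
noncomputable def pairSum : Module.End R (MvPolynomial (Fin 2) R) :=
  1 + (linSubst (replaceSndMat R)).toLinearMap + (linSubst (replaceFstMat R)).toLinearMap

lemma swapMat_row_zero : (swapMat R).toMvPolynomial 0 = X 1 := by
  simp [toMvPolynomial, swapMat, ← C_mul_X_eq_monomial]

lemma replaceSndMat_row_one : (replaceSndMat R).toMvPolynomial 1 = -(X 0 + X 1) := by
  simp [toMvPolynomial, replaceSndMat, ← C_mul_X_eq_monomial]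
  abel

lemma sternOp_apply (f : MvPolynomial (Fin 2) R) :
    sternOp f = linSubst !![1, 0; 1, 1] f + linSubst !![1, 1; 0, 1] f := rfl

lemma pairSum_apply (f : MvPolynomial (Fin 2) R) :
    pairSum f = f + linSubst (replaceSndMat R) f + linSubst (replaceFstMat R) f := rfl

lemma eval_sternOp (f : MvPolynomial (Fin 2) R) (x y : R) :
    eval ![x, y] (sternOp f) = eval ![x, x + y] f + eval ![x + y, y] f := by
  have mulVec_left : !![1, 0; 1, 1] *ᵥ ![x, y] = ![x, x + y] := by
    rw [mulVec_fin_two]; simp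
  have mulVec_right : !![1, 1; 0, 1] *ᵥ ![x, y] = ![x + y, y] := by
    rw [mulVec_fin_two]; simp
  rw [sternOp_apply, map_add, eval_linSubst, eval_linSubst, mulVec_left, mulVec_right]

lemma isHomogeneous_sternOp (hf : f.IsHomogeneous r) : (sternOp f).IsHomogeneous r :=
  (isHomogeneous_linSubst hf _).add (isHomogeneous_linSubst hf _)

lemma isHomogeneous_pairSum (hf : f.IsHomogeneous r) : (pairSum f).IsHomogeneous r :=
  (hf.add (isHomogeneous_linSubst hf _)).add (isHomogeneous_linSubst hf _)

lemma mem_symmForms :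
    f ∈ symmForms R r ↔ f.IsHomogeneous r ∧ linSubst (swapMat R) f = f := by
  simp [invariantForms]

lemma mem_zeroSumSymmForms :
    f ∈ zeroSumSymmForms R r ↔ f.IsHomogeneous r ∧ linSubst (swapMat R) f = f ∧
      linSubst (replaceSndMat R) f = f := by
  simp [invariantForms]

lemma zeroSumSymmForms_le_symmForms : zeroSumSymmForms R r ≤ symmForms R r :=
  fun _ hf ↦ ⟨hf.1, fun A hA ↦ hf.2 A (Set.mem_insert_iff.mpr (Or.inl hA))⟩

lemma swap_sternOp (f : MvPolynomial (Fin 2) R) :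
    linSubst (swapMat R) (sternOp f) = sternOp (linSubst (swapMat R) f) := by
  simp only [sternOp_apply, map_add, linSubst_linSubst, swapMat, mul_fin_two]
  simp [add_comm]

lemma add_swap_mem_symmForms (hf : f.IsHomogeneous r) :
    f + linSubst (swapMat R) f ∈ symmForms R r := by
  have swap_swap : swapMat R * swapMat R = 1 := by simp [swapMat, one_fin_two]
  refine mem_symmForms.mpr ⟨hf.add (isHomogeneous_linSubst hf _), ?_⟩
  rw [map_add, linSubst_linSubst, swap_swap, linSubst_one, add_comm]

lemma sternOp_mem_symmForms (hf : f ∈ symmForms R r) : sternOp f ∈ symmForms R r := by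
  rw [mem_symmForms] at hf ⊢
  exact ⟨isHomogeneous_sternOp hf.1, by rw [swap_sternOp, hf.2]⟩

lemma flip_flip (f : MvPolynomial (Fin 2) R) :
    linSubst (flipMat R) (linSubst (flipMat R) f) = f := by
  have flip_mul_flip : flipMat R * flipMat R = 1 := by simp [flipMat, one_fin_two]
  rw [linSubst_linSubst, flip_mul_flip, linSubst_one]

lemma flip_mem_symmForms (hr : Even r) (hf : f ∈ symmForms R r) :
    linSubst (flipMat R) f ∈ symmForms R r := by
  rw [mem_symmForms] at hf ⊢
  have flip_mul_swap : flipMat R * swapMat R = -(swapMat R * flipMat R) := by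
    simp [flipMat, swapMat]
  refine ⟨isHomogeneous_linSubst hf.1 _, ?_⟩
  rw [linSubst_linSubst, flip_mul_swap, linSubst_neg_of_even hr hf.1, ← linSubst_linSubst, hf.2]

lemma pairSum_mem_zeroSumSymmForms (hf : f ∈ symmForms R r) :
    pairSum f ∈ zeroSumSymmForms R r := by
  rw [mem_symmForms] at hf
  have subst_swap_mul (A : Matrix (Fin 2) (Fin 2) R) :
      linSubst (swapMat R * A) f = linSubst A f := by rw [← linSubst_linSubst, hf.2]
  refine mem_zeroSumSymmForms.mpr ⟨isHomogeneous_pairSum hf.1, ?_, ?_⟩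
  · have snd_mul_swap : replaceSndMat R * swapMat R = swapMat R * replaceFstMat R := by
      simp [replaceSndMat, replaceFstMat, swapMat]
    have fst_mul_swap : replaceFstMat R * swapMat R = swapMat R * replaceSndMat R := by
      simp [replaceSndMat, replaceFstMat, swapMat]
    simp only [pairSum_apply, map_add, linSubst_linSubst, snd_mul_swap, fst_mul_swap,
      subst_swap_mul, hf.2]
    abel
  · have snd_mul_snd : replaceSndMat R * replaceSndMat R = 1 := by
      simp [replaceSndMat, one_fin_two]
    have fst_mul_snd : replaceFstMat R * replaceSndMat R = swapMat R * replaceFstMat R := by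
      simp [replaceSndMat, replaceFstMat, swapMat]
    simp only [pairSum_apply, map_add, linSubst_linSubst, snd_mul_snd, fst_mul_snd,
      subst_swap_mul, linSubst_one]
    abel

-- A Stern step replaces an edge of a Farey triangle by the two other edges of the triangle on the
-- far side.
lemma sternOp_eq_pairSum_flip_sub_flip (hr : Even r) (hf : f.IsHomogeneous r) :
    sternOp f = pairSum (linSubst (flipMat R) f) - linSubst (flipMat R) f := by
  have flip_mul_snd : flipMat R * replaceSndMat R = !![1, 0; 1, 1] := by
    simp [flipMat, replaceSndMat]
  have flip_mul_fst : flipMat R * replaceFstMat R = -!![1, 1; 0, 1] := by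
    simp [flipMat, replaceFstMat]
  rw [pairSum_apply, linSubst_linSubst, linSubst_linSubst, flip_mul_snd, flip_mul_fst,
    linSubst_neg_of_even hr hf, sternOp_apply]
  abel

lemma sternOp_sternOp_sub_self (hr : Even r) (hf : f.IsHomogeneous r) :
    sternOp (sternOp f) - f =
      pairSum (linSubst (flipMat R) (sternOp f)) -
        linSubst (flipMat R) (pairSum (linSubst (flipMat R) f)) := by
  have flip_sternOp : linSubst (flipMat R) (sternOp f) =
      linSubst (flipMat R) (pairSum (linSubst (flipMat R) f)) - f := by
    rw [sternOp_eq_pairSum_flip_sub_flip hr hf, map_sub, flip_flip]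
  rw [sternOp_eq_pairSum_flip_sub_flip hr (isHomogeneous_sternOp hf)]
  nth_rewrite 2 [flip_sternOp]
  abel

/-- The smallest space of forms that contains `zeroSumSymmForms R r` and is stable under
`(x, y) ↦ (x, -y)`. For even `r` it is stable under `sternOp` and contains the image of
`symmForms R r` under `sternOp ^ 2 - 1`. -/
noncomputable def flipClosure (R : Type*) [CommRing R] (r : ℕ) :
    Submodule R (MvPolynomial (Fin 2) R) :=
  zeroSumSymmForms R r ⊔ (zeroSumSymmForms R r).map (linSubst (flipMat R)).toLinearMap

lemma zeroSumSymmForms_le_flipClosure : zeroSumSymmForms R r ≤ flipClosure R r :=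
  le_sup_left

lemma flip_mem_flipClosure (hf : f ∈ zeroSumSymmForms R r) :
    linSubst (flipMat R) f ∈ flipClosure R r :=
  Submodule.mem_sup_right (Submodule.mem_map_of_mem hf)

lemma pairSum_flip_mem_zeroSumSymmForms (hr : Even r) (hf : f ∈ symmForms R r) :
    pairSum (linSubst (flipMat R) f) ∈ zeroSumSymmForms R r :=
  pairSum_mem_zeroSumSymmForms (flip_mem_symmForms hr hf)

lemma sternOp_sternOp_sub_self_mem_flipClosure (hr : Even r) (hf : f ∈ symmForms R r) :
    sternOp (sternOp f) - f ∈ flipClosure R r := by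
  rw [sternOp_sternOp_sub_self hr hf.1]
  exact sub_mem
    (zeroSumSymmForms_le_flipClosure
      (pairSum_flip_mem_zeroSumSymmForms hr (sternOp_mem_symmForms hf)))
    (flip_mem_flipClosure (pairSum_flip_mem_zeroSumSymmForms hr hf))

lemma flipClosure_le_comap_sternOp (hr : Even r) :
    flipClosure R r ≤ (flipClosure R r).comap sternOp := by
  refine sup_le (fun w hw ↦ ?_) (Submodule.map_le_iff_le_comap.mpr fun w hw ↦ ?_)
  · have hsymm := zeroSumSymmForms_le_symmForms hw
    rw [Submodule.mem_comap, sternOp_eq_pairSum_flip_sub_flip hr hw.1]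
    exact sub_mem (zeroSumSymmForms_le_flipClosure (pairSum_flip_mem_zeroSumSymmForms hr hsymm))
      (flip_mem_flipClosure hw)
  · have hsymm := zeroSumSymmForms_le_symmForms hw
    rw [Submodule.mem_comap, Submodule.mem_comap, AlgHom.toLinearMap_apply,
      sternOp_eq_pairSum_flip_sub_flip hr (isHomogeneous_linSubst hw.1 _), flip_flip]
    exact zeroSumSymmForms_le_flipClosure (sub_mem (pairSum_mem_zeroSumSymmForms hsymm) hw)

end Operators

section Dimension

lemma dvd_bind₁_sub {R σ : Type*} [CommRing R] {a : MvPolynomial σ R} {φ : σ → MvPolynomial σ R}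
    (h : ∀ i, a ∣ φ i - X i) (p : MvPolynomial σ R) : a ∣ bind₁ φ p - p := by
  have same_residue : (Ideal.Quotient.mkₐ R (Ideal.span {a})).comp (bind₁ φ) =
      Ideal.Quotient.mkₐ R (Ideal.span {a}) := by
    refine algHom_ext fun i ↦ ?_
    rw [AlgHom.comp_apply, bind₁_X_right]
    exact Ideal.Quotient.eq.mpr (Ideal.mem_span_singleton.mpr (h i))
  exact Ideal.mem_span_singleton.mp (Ideal.Quotient.eq.mp (DFunLike.congr_fun same_residue p))

lemma exists_coeff_ne_zero_of_not_X_dvd {R σ : Type*} [CommRing R] {i : σ}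
    {g : MvPolynomial σ R} (h : ¬ X i ∣ g) : ∃ d : σ →₀ ℕ, d i = 0 ∧ g.coeff d ≠ 0 := by
  rw [X_dvd_iff_modMonomial_eq_zero] at h
  obtain ⟨d, hd⟩ := ne_zero_iff.mp h
  have hdi : ¬ Finsupp.single i 1 ≤ d := fun hle ↦ hd (coeff_modMonomial_of_le g hle)
  exact ⟨d, by simpa [Finsupp.single_le_iff] using hdi,
    by rwa [coeff_modMonomial_of_not_le g hdi] at hd⟩

variable {K : Type*} [Field K] {r k : ℕ} {f g : MvPolynomial (Fin 2) K}

-- The substitution `(x, y) ↦ (-x, x + y)` fixes `x ^ k * g` and is the identity modulo `x`, so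
-- `g ≡ (-1) ^ k * g` modulo `x`.
lemma even_of_X_pow_mul_mem_zeroSumSymmForms [NeZero (2 : K)] (hr : Even r)
    (hf : X 0 ^ k * g ∈ zeroSumSymmForms K r) (hg : ¬ X 0 ∣ g) : Even k := by
  obtain ⟨hhom, -, hreplace⟩ := mem_zeroSumSymmForms.mp hf
  by_contra hk
  set A : Matrix (Fin 2) (Fin 2) K := !![-1, 0; 1, 1] with hA
  have row_zero : A.toMvPolynomial 0 = -X 0 := by
    simp [toMvPolynomial, hA, ← C_mul_X_eq_monomial]
  have row_one : A.toMvPolynomial 1 = X 0 + X 1 := by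
    simp [toMvPolynomial, hA, ← C_mul_X_eq_monomial]
  have fixed : linSubst A (X 0 ^ k * g) = X 0 ^ k * g := by
    have : A = -replaceSndMat K := by simp [hA, replaceSndMat]
    rw [this, linSubst_neg_of_even hr hhom, hreplace]
  have anti : linSubst A g = -g := by
    rw [map_mul, map_pow, linSubst_X, row_zero, (Nat.not_even_iff_odd.mp hk).neg_pow,
      neg_mul, ← mul_neg] at fixed
    exact neg_eq_iff_eq_neg.mp (mul_left_cancel₀ (pow_ne_zero k (X_ne_zero 0)) fixed)
  have hdvd : X 0 ∣ linSubst A g - g := by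
    refine dvd_bind₁_sub (fun i ↦ ?_) g
    fin_cases i
    · exact ⟨-2, by simp only [Fin.zero_eta, row_zero]; ring⟩
    · exact ⟨1, by simp only [Fin.mk_one, row_one]; ring⟩
  have two_unit : IsUnit (C (2 : K) : MvPolynomial (Fin 2) K) :=
    (NeZero.ne (2 : K)).isUnit.map C
  rw [anti, show -g - g = -(C 2 * g) by rw [map_ofNat]; ring, dvd_neg,
    two_unit.dvd_mul_left] at hdvd
  exact hg hdvd

lemma three_mul_le_of_X_pow_dvd (hf : f ∈ zeroSumSymmForms K r) (hne : f ≠ 0)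
    (hdvd : X 0 ^ k ∣ f) : 3 * k ≤ r := by
  obtain ⟨hhom, hswap, hreplace⟩ := mem_zeroSumSymmForms.mp hf
  have hdvd_y : X 1 ^ k ∣ f := by
    simpa only [map_pow, linSubst_X, swapMat_row_zero, hswap]
      using map_dvd (linSubst (swapMat K)) hdvd
  have hdvd_z : (X 0 + X 1) ^ k ∣ f := by
    have h := map_dvd (linSubst (replaceSndMat K)) hdvd_y
    rw [map_pow, linSubst_X, replaceSndMat_row_one, hreplace] at h
    exact (pow_dvd_pow_of_dvd (dvd_neg.mpr dvd_rfl) k).trans h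
  have x_y : IsRelPrime (X 0 : MvPolynomial (Fin 2) K) (X 1) :=
    (X_prime.irreducible.isRelPrime_iff_not_dvd).mpr (by simp)
  have x_z : IsRelPrime (X 0 : MvPolynomial (Fin 2) K) (X 0 + X 1) := by
    rw [X_prime.irreducible.isRelPrime_iff_not_dvd, dvd_add_right dvd_rfl]; simp
  have y_z : IsRelPrime (X 1 : MvPolynomial (Fin 2) K) (X 0 + X 1) := by
    rw [X_prime.irreducible.isRelPrime_iff_not_dvd, dvd_add_left dvd_rfl]; simp
  obtain ⟨h, rfl⟩ : X 0 ^ k * X 1 ^ k * (X 0 + X 1) ^ k ∣ f :=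
    (IsRelPrime.mul_left x_z.pow y_z.pow).mul_dvd (x_y.pow.mul_dvd hdvd hdvd_y) hdvd_z
  have hdeg : (X 0 ^ k * X 1 ^ k * (X 0 + X 1) ^ k : MvPolynomial (Fin 2) K).IsHomogeneous
      (k + k + 1 * k) :=
    ((isHomogeneous_X_pow 0 k).mul (isHomogeneous_X_pow 1 k)).mul
      (((isHomogeneous_X K 0).add (isHomogeneous_X K 1)).pow k)
  have htotal := hhom.totalDegree hne
  rw [totalDegree_mul_of_isDomain (left_ne_zero_of_mul hne) (right_ne_zero_of_mul hne),
    hdeg.totalDegree (left_ne_zero_of_mul hne)] at htotal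
  omega

lemma exists_even_coeff_ne_zero [NeZero (2 : K)] (hr : Even r) (hf : f ∈ zeroSumSymmForms K r)
    (hne : f ≠ 0) : ∃ i < r / 6 + 1,
      f.coeff (Finsupp.single 0 (2 * i) + Finsupp.single 1 (r - 2 * i)) ≠ 0 := by
  obtain ⟨g, hfg, hg⟩ :=
    (FiniteMultiplicity.of_prime_left (X_prime (i := 0)) hne).exists_eq_pow_mul_and_not_dvd
  set k := multiplicity (X 0) f
  obtain ⟨i, hi⟩ := (even_of_X_pow_mul_mem_zeroSumSymmForms hr (hfg ▸ hf) hg).two_dvd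
  have hbound := three_mul_le_of_X_pow_dvd hf hne ⟨g, hfg⟩
  obtain ⟨d, hd0, hd⟩ := exists_coeff_ne_zero_of_not_X_dvd hg
  have hcoeff : f.coeff (Finsupp.single 0 k + d) ≠ 0 := by
    rwa [hfg, X_pow_eq_monomial, coeff_monomial_mul, one_mul]
  have hdegree : k + d 1 = r := by
    have h := hf.1 hcoeff
    simpa [Finsupp.weight_apply, Finsupp.sum_fintype, hd0] using h
  refine ⟨i, by omega, ?_⟩
  convert hcoeff using 2
  ext j
  fin_cases j
  · simp [hi, hd0]
  · simp; omega

/-- The coefficients of `x ^ (2 * i) * y ^ (r - 2 * i)` for `i ≤ r / 6`, which determine a form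
symmetric in `x`, `y`, `-x - y` if the degree `r` is even and `2 ≠ 0` in `K`. -/
noncomputable def evenCoeffs (K : Type*) [Field K] (r : ℕ) :
    MvPolynomial (Fin 2) K →ₗ[K] (Fin (r / 6 + 1) → K) :=
  LinearMap.pi fun i ↦ lcoeff K (Finsupp.single 0 (2 * (i : ℕ)) + Finsupp.single 1 (r - 2 * i))

lemma injective_evenCoeffs_domRestrict [NeZero (2 : K)] (hr : Even r) :
    Function.Injective ((evenCoeffs K r).domRestrict (zeroSumSymmForms K r)) := by
  rw [← LinearMap.ker_eq_bot, LinearMap.ker_eq_bot']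
  rintro ⟨f, hf⟩ hzero
  by_contra hne
  obtain ⟨i, hi, hcoeff⟩ := exists_even_coeff_ne_zero hr hf (fun h ↦ hne (Subtype.ext h))
  exact hcoeff (congr_fun hzero ⟨i, hi⟩)

lemma finiteDimensional_zeroSumSymmForms [NeZero (2 : K)] (hr : Even r) :
    FiniteDimensional K (zeroSumSymmForms K r) :=
  .of_injective _ (injective_evenCoeffs_domRestrict hr)

lemma finrank_zeroSumSymmForms_le [NeZero (2 : K)] (hr : Even r) :
    Module.finrank K (zeroSumSymmForms K r) ≤ r / 6 + 1 := by
  simpa using LinearMap.finrank_le_finrank_of_injective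
    (injective_evenCoeffs_domRestrict (K := K) hr)

lemma finiteDimensional_flipClosure [NeZero (2 : K)] (hr : Even r) :
    FiniteDimensional K (flipClosure K r) := by
  have := finiteDimensional_zeroSumSymmForms (K := K) hr
  unfold flipClosure
  infer_instance

lemma finrank_flipClosure_le [NeZero (2 : K)] (hr : Even r) :
    Module.finrank K (flipClosure K r) ≤ 2 * (r / 6 + 1) := by
  have := finiteDimensional_zeroSumSymmForms (K := K) hr
  calc Module.finrank K (flipClosure K r)
      ≤ Module.finrank K (zeroSumSymmForms K r) + Module.finrank K (zeroSumSymmForms K r) :=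
        (Submodule.finrank_add_le_finrank_add_finrank _ _).trans
          (Nat.add_le_add_left (Submodule.finrank_map_le _ _) _)
    _ ≤ 2 * (r / 6 + 1) := by
        have := finrank_zeroSumSymmForms_le (K := K) hr
        omega

end Dimension

section Recurrence

variable {K V : Type*} [Field K] [AddCommGroup V] [Module K V]

lemma coe_aeval_restrict {R M : Type*} [CommSemiring R] [AddCommMonoid M] [Module R M]
    (T : Module.End R M) {U : Submodule R M} (hU : U ≤ U.comap T) (p : Polynomial R) (u : U) :
    (Polynomial.aeval (T.restrict hU) p u : M) = Polynomial.aeval T p (u : M) := by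
  have pow_restrict (k : ℕ) : (((T.restrict hU) ^ k) u : M) = (T ^ k) (u : M) := by
    rw [Module.End.pow_restrict, LinearMap.coe_restrict_apply]
  simp only [Polynomial.aeval_eq_sum_range, LinearMap.sum_apply, LinearMap.smul_apply,
    Submodule.coe_sum, Submodule.coe_smul, pow_restrict]

lemma exists_monic_aeval_eq_zero_on (T : Module.End K V) {U : Submodule K V}
    [FiniteDimensional K U] (hU : U ≤ U.comap T) {ℓ : ℕ} (hℓ : Module.finrank K U ≤ ℓ) :
    ∃ q : Polynomial K, q.Monic ∧ q.natDegree = ℓ ∧ ∀ u ∈ U, Polynomial.aeval T q u = 0 := by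
  set χ := (T.restrict hU).charpoly
  have hχ : χ.Monic := LinearMap.charpoly_monic _
  refine ⟨Polynomial.X ^ (ℓ - χ.natDegree) * χ, (Polynomial.monic_X_pow _).mul hχ, ?_,
    fun u hu ↦ ?_⟩
  · rw [(Polynomial.monic_X_pow _).natDegree_mul hχ, Polynomial.natDegree_X_pow,
      LinearMap.charpoly_natDegree, Nat.sub_add_cancel hℓ]
  · have h : Polynomial.aeval T χ u = 0 := by
      rw [← coe_aeval_restrict T hU χ ⟨u, hu⟩, LinearMap.aeval_self_charpoly,
        LinearMap.zero_apply, Submodule.coe_zero]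
    rw [map_mul, Module.End.mul_apply, h, map_zero]

lemma exists_eq_add_mul_neg_one_pow_of_periodic [NeZero (2 : K)] {u : ℕ → K}
    (hu : Function.Periodic u 2) : ∃ b c : K, ∀ n, u n = b + c * (-1) ^ n := by
  have two_ne_zero : (2 : K) ≠ 0 := NeZero.ne 2
  refine ⟨(u 0 + u 1) / 2, (u 0 - u 1) / 2, fun n ↦ ?_⟩
  induction n using Nat.twoStepInduction with
  | zero => field_simp; ring
  | one => field_simp; ring
  | more n ih _ => rw [hu, ih, pow_add, neg_one_sq, mul_one]

lemma aeval_apply_eq_pow_add_sum {R M : Type*} [CommSemiring R] [AddCommMonoid M] [Module R M]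
    (T : Module.End R M) {q : Polynomial R} (hq : q.Monic) (v : M) :
    Polynomial.aeval T q v = (T ^ q.natDegree) v +
      ∑ j ∈ Finset.Icc 1 q.natDegree, q.coeff (q.natDegree - j) • (T ^ (q.natDegree - j)) v := by
  conv_lhs => rw [hq.as_sum]
  simp only [map_add, map_sum, map_mul, map_pow, Polynomial.aeval_X, Polynomial.aeval_C,
    LinearMap.add_apply, LinearMap.sum_apply, Module.End.mul_apply, Module.algebraMap_end_apply]
  congr 1
  exact Finset.sum_nbij' (q.natDegree - ·) (q.natDegree - ·) (by grind) (by grind) (by grind)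
    (by grind) (by grind)

lemma exists_recurrence_of_aeval_sq_sub_eq_zero [NeZero (2 : K)] (T : Module.End K V)
    (Φ : V →ₗ[K] K) {q : Polynomial K} (hq : q.Monic) {v : V}
    (hv : Polynomial.aeval T q (T (T v) - v) = 0) :
    ∃ b c : K, ∀ n, q.natDegree ≤ n →
      Φ ((T ^ n) v) = (∑ j ∈ Finset.Icc 1 q.natDegree,
        -q.coeff (q.natDegree - j) * Φ ((T ^ (n - j)) v)) + b + c * (-1) ^ n := by
  set w := Polynomial.aeval T q v with hw
  have hTw : (T ^ 2) w = w := by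
    have commutes : T ^ 2 * Polynomial.aeval T q = Polynomial.aeval T q * T ^ 2 := by
      have h := ((Commute.all (Polynomial.X ^ 2) q).map (Polynomial.aeval T)).eq
      rwa [map_pow, Polynomial.aeval_X] at h
    rw [map_sub, sub_eq_zero] at hv
    rw [hw, ← Module.End.mul_apply, commutes, Module.End.mul_apply, pow_two, Module.End.mul_apply,
      hv]
  obtain ⟨b, c, hbc⟩ := exists_eq_add_mul_neg_one_pow_of_periodic
    (u := fun m ↦ Φ ((T ^ m) w)) fun m ↦ by simp only [pow_add, Module.End.mul_apply, hTw]
  refine ⟨b, c * (-1) ^ q.natDegree, fun n hn ↦ ?_⟩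
  obtain ⟨m, rfl⟩ := Nat.exists_eq_add_of_le' hn
  have expansion : Φ ((T ^ m) w) = Φ ((T ^ (m + q.natDegree)) v) +
      ∑ j ∈ Finset.Icc 1 q.natDegree,
        q.coeff (q.natDegree - j) * Φ ((T ^ (m + q.natDegree - j)) v) := by
    rw [hw, aeval_apply_eq_pow_add_sum T hq]
    simp only [map_add, map_sum, map_smul, smul_eq_mul, ← Module.End.mul_apply, ← pow_add]
    congr 1
    refine Finset.sum_congr rfl fun j hj ↦ ?_
    rw [Nat.add_sub_assoc (Finset.mem_Icc.mp hj).2]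
  have sign : (-1 : K) ^ q.natDegree * (-1) ^ (m + q.natDegree) = (-1) ^ m := by
    rw [← pow_add, add_left_comm, pow_add, Even.neg_one_pow ⟨_, rfl⟩, mul_one]
  rw [add_assoc, mul_assoc, sign, ← hbc m, expansion]
  simp only [neg_mul, Finset.sum_neg_distrib]
  ring

end Recurrence

section SternSums

lemma stern_two_mul {n : ℕ} (hn : 1 ≤ n) (k : ℤ) : stern (n + 1) (2 * k) = stern n k := by
  obtain ⟨m, rfl⟩ := Nat.exists_eq_add_of_le' hn
  rw [stern, if_pos (by omega), Int.mul_ediv_cancel_left _ two_ne_zero]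

lemma stern_two_mul_add_one {n : ℕ} (hn : 1 ≤ n) (k : ℤ) :
    stern (n + 1) (2 * k + 1) = stern n k + stern n (k + 1) := by
  obtain ⟨m, rfl⟩ := Nat.exists_eq_add_of_le' hn
  rw [stern, if_neg (by omega)]
  congr 2 <;> omega

lemma sum_range_two_mul {M : Type*} [AddCommMonoid M] (F : ℕ → M) (N : ℕ) :
    ∑ k ∈ Finset.range (2 * N), F k = ∑ k ∈ Finset.range N, (F (2 * k) + F (2 * k + 1)) := by
  induction N with
  | zero => rfl
  | succ N ih => rw [Nat.mul_succ, Finset.sum_range_succ, Finset.sum_range_succ,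
      Finset.sum_range_succ, ih, add_assoc]

lemma S_succ {n : ℕ} (hn : 1 ≤ n) (f : MvPolynomial (Fin 2) ℝ) :
    S (n + 1) f = S n (sternOp f) := by
  rw [S, S, pow_succ', sum_range_two_mul]
  refine Finset.sum_congr rfl fun k _ ↦ ?_
  have next_even : ((2 * k + 1 : ℕ) : ℤ) + 1 = 2 * ((k : ℤ) + 1) := by push_cast; ring
  rw [next_even, Nat.cast_succ, Nat.cast_mul, Nat.cast_ofNat, stern_two_mul hn,
    stern_two_mul hn, stern_two_mul_add_one hn, eval_sternOp, Nat.cast_add]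

lemma S_one (f : MvPolynomial (Fin 2) ℝ) : S 1 f = eval ![0, 1] f + eval ![1, 0] f := by
  simp [S, Finset.sum_range_succ, stern]

lemma S_one_eq_eval_add_swap (f : MvPolynomial (Fin 2) ℝ) :
    S 1 f = eval ![0, 1] (f + linSubst (swapMat ℝ) f) := by
  have swap_mulVec : swapMat ℝ *ᵥ ![0, 1] = ![1, 0] := by
    rw [swapMat, mulVec_fin_two]; simp
  rw [S_one, map_add, eval_linSubst, swap_mulVec]

lemma S_add_one_eq_eval_sternOp_pow (n : ℕ) (f : MvPolynomial (Fin 2) ℝ) :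
    S (n + 1) f = eval ![0, 1] ((sternOp ^ n) (f + linSubst (swapMat ℝ) f)) := by
  induction n generalizing f with
  | zero => exact S_one_eq_eval_add_swap f
  | succ n ih =>
    rw [S_succ n.succ_pos, ih, swap_sternOp, ← map_add, pow_succ, Module.End.mul_apply]

end SternSums

end SternArray

/-- For even `r`, with `ℓ = (r+6)/3` if `r ≡ 0 (mod 6)`, `ℓ = (r+4)/3` if
`r ≡ 2 (mod 6)`, `ℓ = (r+2)/3` if `r ≡ 4 (mod 6)`, there exist reals `a_1, …, a_ℓ`
(depending only on `r`) and `N` such that for every homogeneous polynomial `f` of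
degree `r` there are constants `b`, `c` (depending on `f`) with
`S n f = ∑_{j=1}^{ℓ} a_j S (n-j) f + b + c (-1)^n` for all `n ≥ N`. -/
theorem S_inhomogeneous_recurrence_even (r : ℕ) (hr : Even r) (ℓ : ℕ)
    (hℓ : (r % 6 = 0 ∧ ℓ = (r + 6) / 3) ∨ (r % 6 = 2 ∧ ℓ = (r + 4) / 3) ∨
      (r % 6 = 4 ∧ ℓ = (r + 2) / 3)) :
    ∃ (a : ℕ → ℝ) (N : ℕ), ∀ f : MvPolynomial (Fin 2) ℝ, f.IsHomogeneous r →
      ∃ b c : ℝ, ∀ n : ℕ, N ≤ n →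
        S n f = (∑ j ∈ Finset.Icc 1 ℓ, a j * S (n - j) f) + b + c * (-1 : ℝ) ^ n := by
  obtain rfl : ℓ = 2 * (r / 6 + 1) := by omega
  have := SternArray.finiteDimensional_flipClosure (K := ℝ) hr
  obtain ⟨q, hq, hdeg, hzero⟩ := SternArray.exists_monic_aeval_eq_zero_on SternArray.sternOp
    (SternArray.flipClosure_le_comap_sternOp (R := ℝ) hr) (SternArray.finrank_flipClosure_le hr)
  refine ⟨fun j ↦ -q.coeff (q.natDegree - j), q.natDegree + 1, fun f hf ↦ ?_⟩
  obtain ⟨b, c, hrec⟩ := SternArray.exists_recurrence_of_aeval_sq_sub_eq_zero SternArray.sternOp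
    (MvPolynomial.aeval ![(0 : ℝ), 1]).toLinearMap hq
    (hzero _ (SternArray.sternOp_sternOp_sub_self_mem_flipClosure hr
      (SternArray.add_swap_mem_symmForms hf)))
  refine ⟨b, -c, fun n hn ↦ ?_⟩
  obtain ⟨m, rfl⟩ := Nat.exists_eq_add_of_le' (Nat.one_le_of_lt hn)
  rw [← hdeg, SternArray.S_add_one_eq_eval_sternOp_pow, pow_succ, mul_neg_one, neg_mul_neg]
  refine (hrec m (by omega)).trans ?_
  congr 2
  refine Finset.sum_congr rfl fun j hj ↦ ?_
  have hjm : m + 1 - j = m - j + 1 := by grind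
  rw [hjm, SternArray.S_add_one_eq_eval_sternOp_pow]
  rfl
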